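/- arXiv:1606.07881 — 3 statements merged into one kernel-verified Lean document; each statement's English description precedes it below -/
import Mathlib

section
/- For every countable partial order (P, ≤) there exists a family (G_p)_{p ∈ P} of finite simple graphs such that for all p, q ∈ P one has p ≤ q if and only if there exists a graph homomorphism from G_p to G_q. (The homomorphism order of finite simple graphs is countably universal.) -/
/-!
Enumerate the preorder and let `p ↦ initialUpper p` collect the elements above `p` that are
enumerated no later than `p`. These sets are finite, and `p ≤ q` holds precisely when every `k ≤ p`
enumerated no later than `p` has some `l ≤ q` enumerated no later than `q` with
`initialUpper l ⊆ initialUpper k`. Products of primes turn inclusion into divisibility.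

Divisibility is realised by homomorphisms between circulant graphs with jumps `1, 2, 6`. A
homomorphism into such a graph on `ZMod b` turns the walk `0, 1, 2, …` into a walk whose increments
lie in `{±1, ±2, ±6}`, as do their sums over windows of length `2` and `6`. This forces the windows
of length `2` to have sums in `{±1, ±2}` and all increments to be congruent modulo `3`. The sum over
a window of length `6` is then divisible by `3`, so it is `±6`, and each pair in it sums to `±2`:
all increments equal the same sign. So a homomorphism from `ZMod a` winds around `ZMod b` steadily,
and `b ∣ a`. Disjoint unions of these graphs realise the quantifiers `∀ k, ∃ l`, since
each component is connected and so lands in a single component.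
-/

open Encodable Finset Function

section DivisibilityCode

lemma prod_dvd_prod_iff_subset {ι M : Type*} [CommMonoidWithZero M] {ℓ : ι → M}
    (hprime : ∀ i, Prime (ℓ i)) (hdvd : ∀ i j, ℓ i ∣ ℓ j → i = j) {s t : Finset ι} :
    ∏ i ∈ s, ℓ i ∣ ∏ i ∈ t, ℓ i ↔ s ⊆ t := by
  refine ⟨fun h i hi => ?_, prod_dvd_prod_of_subset s t ℓ⟩
  obtain ⟨j, hj, hij⟩ := ((hprime i).dvd_finsetProd_iff ℓ).1 ((dvd_prod_of_mem ℓ hi).trans h)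
  rwa [hdvd i j hij]

lemma exists_finset_code_dvd_iff_subset (α : Type*) [Countable α] (N : ℕ) :
    ∃ code : Finset α → ℕ, (∀ s, N < code s) ∧ ∀ s t, code s ∣ code t ↔ s ⊆ t := by
  obtain ⟨e, he⟩ := Countable.exists_injective_nat α
  let ℓ : α → ℕ := fun x => Nat.nth Nat.Prime (e x)
  have hprime (x : α) : (ℓ x).Prime := Nat.prime_nth_prime _
  have hdvd (x y : α) (h : ℓ x ∣ ℓ y) : x = y :=
    he (Nat.nth_injective Nat.infinite_setOfPred_prime
      ((Nat.prime_dvd_prime_iff_eq (hprime x) (hprime y)).1 h))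
  refine ⟨fun s => (N + 1) * ∏ x ∈ s, ℓ x, fun s => ?_, fun s t => ?_⟩
  · exact Nat.le_mul_of_pos_right _ (prod_pos fun x _ => (hprime x).pos)
  · rw [Nat.mul_dvd_mul_iff_left N.succ_pos,
      prod_dvd_prod_iff_subset (fun x => (hprime x).prime) hdvd]

end DivisibilityCode

section InitialSegment

/-- The finite set of elements enumerated no later than `p`, in the order of `encode`. -/
noncomputable def initialSegment {P : Type*} [Encodable P] (p : P) : Finset P :=
  (Iic (encode p)).preimage encode encode_injective.injOn

lemma mem_initialSegment {P : Type*} [Encodable P] {p q : P} :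
    q ∈ initialSegment p ↔ encode q ≤ encode p := by
  simp [initialSegment]

variable {P : Type*} [Encodable P] [Preorder P] {p q : P}

open Classical in
/-- The finite set of elements above `p` enumerated no later than `p`. Reverse inclusion of these
sets is a suborder of `P` in which every element has only finitely many elements above it. -/
noncomputable def initialUpper (p : P) : Finset P := {q ∈ initialSegment p | p ≤ q}

open Classical in
/-- The finite set of elements below `p` enumerated no later than `p`, whose members stand for the
components of the graph representing `p`. -/
noncomputable def initialLower (p : P) : Finset P := {q ∈ initialSegment p | q ≤ p}

lemma mem_initialUpper : q ∈ initialUpper p ↔ encode q ≤ encode p ∧ p ≤ q := by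
  simp only [initialUpper, mem_filter, mem_initialSegment]

lemma mem_initialLower : q ∈ initialLower p ↔ encode q ≤ encode p ∧ q ≤ p := by
  simp only [initialLower, mem_filter, mem_initialSegment]

lemma initialUpper_subset_iff :
    initialUpper q ⊆ initialUpper p ↔ encode q ≤ encode p ∧ p ≤ q := by
  refine ⟨fun h => mem_initialUpper.1 (h (mem_initialUpper.2 ⟨le_rfl, le_rfl⟩)), fun h r hr => ?_⟩
  rw [mem_initialUpper] at hr ⊢
  exact ⟨hr.1.trans h.1, h.2.trans hr.2⟩

lemma le_iff_forall_initialLower :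
    p ≤ q ↔ ∀ k ∈ initialLower p, ∃ l ∈ initialLower q, initialUpper l ⊆ initialUpper k := by
  simp only [mem_initialLower, initialUpper_subset_iff]
  constructor
  · rintro hpq k ⟨-, hkp⟩
    rcases le_total (encode k) (encode q) with hkq | hqk
    · exact ⟨k, ⟨hkq, hkp.trans hpq⟩, le_rfl, le_rfl⟩
    · exact ⟨q, ⟨le_rfl, le_rfl⟩, hqk, hkp.trans hpq⟩
  · intro h
    obtain ⟨l, ⟨-, hlq⟩, -, hpl⟩ := h p ⟨le_rfl, le_rfl⟩
    exact hpl.trans hlq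

end InitialSegment

theorem exists_finset_nat_le_iff_dvd (P : Type*) [Countable P] [Preorder P] (N : ℕ) :
    ∃ A : P → Finset ℕ, (∀ p, ∀ a ∈ A p, N < a) ∧
      ∀ p q : P, p ≤ q ↔ ∀ a ∈ A p, ∃ b ∈ A q, b ∣ a := by
  have := Encodable.ofCountable P
  obtain ⟨code, hlt, hdvd⟩ := exists_finset_code_dvd_iff_subset P N
  refine ⟨fun p => (initialLower p).image fun k => code (initialUpper k), fun p => ?_,
    fun p q => ?_⟩
  · simp only [forall_mem_image, hlt, implies_true]
  · simp only [le_iff_forall_initialLower (p := p), forall_mem_image, exists_mem_image, hdvd]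

section SigmaGraph

variable {ι κ : Type*} {V : ι → Type*} {W : κ → Type*}

/-- The disjoint union of a family of graphs, on the sigma type of their vertices. -/
def sigmaGraph (G : ∀ i, SimpleGraph (V i)) : SimpleGraph (Σ i, V i) :=
  ⨆ i, (G i).map (Embedding.sigmaMk i)

variable {G : ∀ i, SimpleGraph (V i)} {H : ∀ j, SimpleGraph (W j)}

lemma sigmaGraph_adj_mk {i : ι} {x y : V i} :
    (sigmaGraph G).Adj ⟨i, x⟩ ⟨i, y⟩ ↔ (G i).Adj x y := by
  simp only [sigmaGraph, SimpleGraph.iSup_adj, SimpleGraph.map_adj, Embedding.sigmaMk_apply]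
  constructor
  · rintro ⟨_, _, _, hadj, ⟨⟩, ⟨⟩⟩
    exact hadj
  · exact fun hadj => ⟨i, x, y, hadj, rfl, rfl⟩

lemma fst_eq_of_sigmaGraph_adj {x y : Σ i, V i} (h : (sigmaGraph G).Adj x y) : x.1 = y.1 := by
  simp only [sigmaGraph, SimpleGraph.iSup_adj, SimpleGraph.map_adj] at h
  obtain ⟨_, _, _, -, rfl, rfl⟩ := h
  rfl

lemma exists_hom_of_connected_hom_sigmaGraph {U : Type*} {K : SimpleGraph U} (hK : K.Connected)
    (f : K →g sigmaGraph H) : ∃ j, Nonempty (K →g H j) := by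
  obtain ⟨u₀⟩ := hK.nonempty
  have hfst (u : U) : (f u).1 = (f u₀).1 := by
    obtain ⟨w⟩ := hK.preconnected u u₀
    induction w with
    | nil => rfl
    | cons hadj _ ih => exact (fst_eq_of_sigmaGraph_adj (f.map_adj hadj)).trans ih
  have hlift (u : U) : ∃ v, f u = ⟨(f u₀).1, v⟩ := ⟨hfst u ▸ (f u).2, by grind⟩
  choose g hg using hlift
  refine ⟨(f u₀).1, ⟨g, fun {u v} huv => ?_⟩⟩
  have hadj := f.map_adj huv
  rwa [hg u, hg v, sigmaGraph_adj_mk] at hadj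

theorem nonempty_sigmaGraph_hom_iff (hG : ∀ i, (G i).Connected) :
    Nonempty (sigmaGraph G →g sigmaGraph H) ↔ ∀ i, ∃ j, Nonempty (G i →g H j) := by
  constructor
  · rintro ⟨f⟩ i
    exact exists_hom_of_connected_hom_sigmaGraph (hG i)
      (f.comp ⟨Sigma.mk i, fun h => sigmaGraph_adj_mk.2 h⟩)
  · intro h
    choose j f using h
    refine ⟨⟨fun x => ⟨j x.1, (f x.1).some x.2⟩, ?_⟩⟩
    rintro ⟨i, x⟩ ⟨i', y⟩ hadj
    obtain rfl : i = i' := fst_eq_of_sigmaGraph_adj hadj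
    exact sigmaGraph_adj_mk.2 ((f i).some.map_adj (sigmaGraph_adj_mk.1 hadj))

end SigmaGraph

section RigidCirculant

/-- The jumps `1, 2, 6`. An integer `s` is a jump up to sign when `s.natAbs ∈ jumps`. -/
def jumps : Finset ℕ := {1, 2, 6}

/-- The circulant graph on `ZMod n` with jumps `1, 2, 6`: for large `n`, divisibility of `n` governs
the homomorphisms between these graphs. -/
def rigidCirculant (n : ℕ) : SimpleGraph (ZMod n) :=
  SimpleGraph.circulantGraph ((↑) '' (jumps : Set ℕ))

lemma mem_jumps {k : ℕ} : k ∈ jumps ↔ k = 1 ∨ k = 2 ∨ k = 6 := by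
  simp [jumps]

lemma le_six_of_mem_jumps {k : ℕ} (hk : k ∈ jumps) : k ≤ 6 := by
  rw [mem_jumps] at hk
  lia

lemma abs_le_six_of_natAbs_mem_jumps {s : ℤ} (hs : s.natAbs ∈ jumps) : |s| ≤ 6 := by
  rw [Int.abs_eq_natAbs]
  exact_mod_cast le_six_of_mem_jumps hs

lemma intCast_zmod_inj_of_abs_sub_lt {n : ℕ} {s t : ℤ} (h : (s : ZMod n) = t)
    (hlt : |s - t| < n) : s = t := by
  rw [← sub_eq_zero, ← Int.cast_sub, ZMod.intCast_zmod_eq_zero_iff_dvd] at h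
  exact sub_eq_zero.1 (Int.eq_zero_of_abs_lt_dvd h hlt)

lemma rigidCirculant_adj_iff {n : ℕ} (hn : 6 < n) {x y : ZMod n} :
    (rigidCirculant n).Adj x y ↔ ∃ s : ℤ, s.natAbs ∈ jumps ∧ y - x = s := by
  simp only [rigidCirculant, SimpleGraph.circulantGraph_adj]
  constructor
  · rintro ⟨-, ⟨k, hk, h⟩ | ⟨k, hk, h⟩⟩
    · exact ⟨-k, by simpa using hk, by simp [h]⟩
    · exact ⟨k, by simpa using hk, by simp [h]⟩
  · rintro ⟨s, hs, h⟩
    refine ⟨?_, ?_⟩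
    · rintro rfl
      have hs_six : |s| ≤ 6 := abs_le_six_of_natAbs_mem_jumps hs
      have hs_zero : s = 0 := intCast_zmod_inj_of_abs_sub_lt (n := n)
        (by rw [← h, sub_self, Int.cast_zero]) (by rw [sub_zero]; lia)
      simp [hs_zero, mem_jumps] at hs
    · obtain ⟨k, rfl | rfl⟩ := s.eq_nat_or_neg
      · exact .inr ⟨k, by simpa using hs, by simp [h]⟩
      · exact .inl ⟨k, by simpa using hs, by rw [← neg_sub, h]; simp⟩

lemma rigidCirculant_connected (n : ℕ) : (rigidCirculant n).Connected := by
  have hsucc (x : ZMod n) : (rigidCirculant n).Reachable x (x + 1) := by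
    by_cases hx : x = x + 1
    · rw [← hx]
    · exact SimpleGraph.Adj.reachable ⟨hx, .inr ⟨1, by simp [jumps], by simp⟩⟩
  have hzero (k : ℤ) : (rigidCirculant n).Reachable 0 (k : ZMod n) := by
    induction k with
    | zero => simp
    | succ k ih => simpa using ih.trans (hsucc _)
    | pred k ih => exact ih.trans (by simpa using (hsucc ((-k - 1 : ℤ) : ZMod n)).symm)
  refine (SimpleGraph.connected_iff_exists_forall_reachable _).2 ⟨0, fun x => ?_⟩
  obtain ⟨k, rfl⟩ := ZMod.intCast_surjective x
  exact hzero k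

lemma natAbs_add_le_two_and_modEq {x y : ℤ} (hx : x.natAbs ∈ jumps) (hy : y.natAbs ∈ jumps)
    (hxy : (x + y).natAbs ∈ jumps) : (x + y).natAbs ≤ 2 ∧ x ≡ y [ZMOD 3] := by
  simp only [mem_jumps, Int.ModEq] at *
  omega

lemma exists_isUnit_eq_of_sum_mem_jumps {d : ℕ → ℤ}
    (hd : ∀ k ∈ jumps, ∀ n, (∑ i ∈ range k, d (n + i)).natAbs ∈ jumps) :
    ∃ c, IsUnit c ∧ ∀ n, d n = c := by
  have hone (n : ℕ) : (d n).natAbs ∈ jumps := by simpa using hd 1 (by decide) n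
  have hpair (n : ℕ) : (d n + d (n + 1)).natAbs ≤ 2 ∧ d n ≡ d (n + 1) [ZMOD 3] :=
    natAbs_add_le_two_and_modEq (hone n) (hone (n + 1))
      (by simpa [sum_range_succ] using hd 2 (by decide) n)
  have hmod (n : ℕ) : d n ≡ d 0 [ZMOD 3] := by
    induction n with
    | zero => rfl
    | succ n ih => exact (hpair n).2.symm.trans ih
  have hstep (n : ℕ) : d (n + 1) = d n ∧ (d n = 1 ∨ d n = -1) := by
    have hexpand : ∑ i ∈ range 6, d (n + i) =
        (d n + d (n + 1)) + (d (n + 2) + d (n + 3)) + (d (n + 4) + d (n + 5)) := by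
      simp [sum_range_succ, add_assoc]
    have hsum_mod : ∑ i ∈ range 6, d (n + i) ≡ 6 * d 0 [ZMOD 3] := by
      simpa using Int.ModEq.sum fun i (_ : i ∈ range 6) => hmod (n + i)
    have hsum_six : (∑ i ∈ range 6, d (n + i)).natAbs = 6 := by
      have := mem_jumps.1 (hd 6 (by decide) n)
      rw [Int.ModEq] at hsum_mod
      lia
    have hsum_two : (d n + d (n + 1)).natAbs = 2 := by
      have := hpair n
      have := hpair (n + 2)
      have := hpair (n + 4)
      lia
    have := mem_jumps.1 (hone n)
    have := mem_jumps.1 (hone (n + 1))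
    have : d n % 3 = d (n + 1) % 3 := (hpair n).2
    omega
  refine ⟨d 0, Int.isUnit_iff.2 (hstep 0).2, fun n => ?_⟩
  induction n with
  | zero => rfl
  | succ n ih => rw [(hstep n).1, ih]

/- Both sides are integers with the same residue; the sum of at most `6` increments and `s` have
absolute values at most `36` and `6`, whence the bound `42`. -/
lemma sum_increments_eq {b : ℕ} (hb : 42 < b) {u : ℕ → ZMod b} {d : ℕ → ℤ}
    (hd : ∀ n, (d n).natAbs ∈ jumps) (hu : ∀ n, u (n + 1) - u n = d n) {k n : ℕ} {s : ℤ}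
    (hk : k ∈ jumps) (hs : s.natAbs ∈ jumps) (hus : u (n + k) - u n = s) :
    ∑ i ∈ range k, d (n + i) = s := by
  have hcast : ((∑ i ∈ range k, d (n + i) : ℤ) : ZMod b) = s := by
    rw [Int.cast_sum, ← hus]
    simpa only [← hu, add_assoc, add_zero] using sum_range_sub (fun i => u (n + i)) k
  have hk_six : k ≤ 6 := le_six_of_mem_jumps hk
  refine intCast_zmod_inj_of_abs_sub_lt hcast ?_
  calc |∑ i ∈ range k, d (n + i) - s|
    _ ≤ |∑ i ∈ range k, d (n + i)| + |s| := abs_sub _ _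
    _ ≤ ∑ i ∈ range k, |d (n + i)| + |s| := by gcongr; exact abs_sum_le_sum_abs _ _
    _ ≤ (∑ _i ∈ range k, 6) + 6 := by
      gcongr
      exacts [abs_le_six_of_natAbs_mem_jumps (hd _), abs_le_six_of_natAbs_mem_jumps hs]
    _ = k * 6 + 6 := by simp
    _ < b := by lia

theorem exists_isUnit_sub_eq_of_adj {b : ℕ} (hb : 42 < b) {u : ℕ → ZMod b}
    (hu : ∀ k ∈ jumps, ∀ n, (rigidCirculant b).Adj (u n) (u (n + k))) :
    ∃ c : ℤ, IsUnit c ∧ ∀ n, u (n + 1) - u n = c := by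
  have hincr {k : ℕ} (hk : k ∈ jumps) (n : ℕ) : ∃ s : ℤ, s.natAbs ∈ jumps ∧ u (n + k) - u n = s :=
    (rigidCirculant_adj_iff (by lia)).1 (hu k hk n)
  choose d hd hud using hincr (k := 1) (by decide)
  obtain ⟨c, hc, hdc⟩ := exists_isUnit_eq_of_sum_mem_jumps (d := d) fun k hk n => by
    obtain ⟨s, hs, hus⟩ := hincr hk n
    rwa [sum_increments_eq hb hd hud hk hs hus]
  exact ⟨c, hc, fun n => by rw [hud, hdc]⟩

theorem nonempty_rigidCirculant_hom_iff {a b : ℕ} (ha : 6 < a) (hb : 42 < b) :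
    Nonempty (rigidCirculant a →g rigidCirculant b) ↔ b ∣ a := by
  constructor
  · rintro ⟨f⟩
    obtain ⟨c, hc, hfc⟩ := exists_isUnit_sub_eq_of_adj hb (u := fun n => f (n : ZMod a))
      fun k hk n => f.map_adj ((rigidCirculant_adj_iff ha).2 ⟨k, hk, by simp⟩)
    have hwind : ((a * c : ℤ) : ZMod b) = 0 := by
      have hsum := sum_range_sub (fun n : ℕ => f (n : ZMod a)) a
      simpa [-sum_sub_distrib, -Nat.cast_add, hfc] using hsum
    rw [ZMod.intCast_zmod_eq_zero_iff_dvd, hc.dvd_mul_right] at hwind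
    exact Int.natCast_dvd_natCast.1 hwind
  · intro hba
    refine ⟨ZMod.castHom hba (ZMod b), fun {x y} hadj => ?_⟩
    obtain ⟨s, hs, hxy⟩ := (rigidCirculant_adj_iff ha).1 hadj
    exact (rigidCirculant_adj_iff (by lia)).2 ⟨s, hs, by rw [← map_sub, hxy, map_intCast]⟩

end RigidCirculant

theorem graph_hom_order_universal_general (P : Type*) [Countable P] [Preorder P] :
    ∃ (V : P → Type) (_ : ∀ p, Fintype (V p)) (G : ∀ p, SimpleGraph (V p)),
      ∀ p q : P, p ≤ q ↔ Nonempty (G p →g G q) := by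
  obtain ⟨A, hA, hle⟩ := exists_finset_nat_le_iff_dvd P 42
  have hpos (p : P) (a : A p) : NeZero (a : ℕ) := ⟨by have := hA p a a.2; lia⟩
  have hhom (p q : P) (a : A p) (b : A q) :
      Nonempty (rigidCirculant a →g rigidCirculant b) ↔ (b : ℕ) ∣ a :=
    nonempty_rigidCirculant_hom_iff (by have := hA p a a.2; lia) (hA q b b.2)
  refine ⟨fun p => Σ a : A p, ZMod a, fun p => inferInstance,
    fun p => sigmaGraph fun a : A p => rigidCirculant a, fun p q => ?_⟩
  simp only [nonempty_sigmaGraph_hom_iff fun _ => rigidCirculant_connected _, hhom, hle,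
    Subtype.forall, Subtype.exists, exists_prop]

/-- The homomorphism order of finite simple graphs is countably universal:
every countable partial order embeds into it. -/
theorem graph_hom_order_universal (P : Type*) [Countable P] [PartialOrder P] :
    ∃ (V : P → Type) (_ : ∀ p, Fintype (V p)) (G : ∀ p, SimpleGraph (V p)),
      ∀ p q : P, p ≤ q ↔ Nonempty (G p →g G q) :=
  graph_hom_order_universal_general P
end

section
/- Let G₁ and G₂ be finite simple graphs with G₁ nonempty, such that G₁ ⟶ G₂ but not G₂ ⟶ G₁, and such that it is not the case that G₁ has no edges and G₂ is 2-colorable (i.e. the pair (G₁,G₂) is not the gap (K₁,K₂) up to homomorphism equivalence). Then for every countable partial order (P, ≤) there exists a family (H_p)_{p ∈ P} of finite simple graphs such that for every p ∈ P one has G₁ ⟶ H_p, H_p ⟶ G₂, not H_p ⟶ G₁, not G₂ ⟶ H_p, and for all p, q ∈ P one has p ≤ q if and only if H_p ⟶ H_q. (Fractal property: every non-gap interval of the homomorphism order is universal.) -/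
/-!
Countable preorders are embedded one element at a time, keeping every finite stage *separating*:
whenever no element of `S` lies below an element of `T`, some `a` below the image of `S` and some
`b` above the image of `T` satisfy `¬ a ≤ b`. In an order with binary suprema and infima such a
stage can be extended by a point as soon as finitely many pairs `¬ a ≤ b` can be split
simultaneously by one `y`.

In an interval `[A, B]` of the homomorphism order in which `A` has an edge, the graphs
`A + K × B` are such elements `y`, where `K` has large chromatic number but all its small subgraphs
are bipartite: the first property gives `X ≤ Y` from `X × K ≤ Y`, the second gives it from
`X ≤ Y + K`. Shift graphs provide `K`: their chromatic number is unbounded, and a short closed walk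
shifts a strictly increasing tuple by the difference between its numbers of forward and backward
steps, which must therefore vanish. If `A` has no edge, it may be replaced by the complete graph
`K₂`.
-/

namespace HomOrder

/-! ### Embedding countable preorders -/

section Order

variable {α P : Type*} [Preorder α] [Preorder P]

theorem exists_isGLB_insert (hinf : ∀ a b : α, ∃ c, IsGLB {a, b} c) (a : α) {s : Set α}
    (hs : s.Finite) : ∃ c, IsGLB (insert a s) c := by
  induction s, hs using Set.Finite.induction_on with
  | empty => exact ⟨a, by simp⟩
  | @insert b s _ _ ih =>
    obtain ⟨c, hc⟩ := ih
    obtain ⟨d, hd⟩ := hinf b c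
    refine ⟨d, isGLB_iff_le_iff.2 fun x => ?_⟩
    rw [isGLB_iff_le_iff.1 hd x, Set.insert_comm, lowerBounds_insert, lowerBounds_insert,
      lowerBounds_singleton, Set.mem_inter_iff, Set.mem_inter_iff, Set.mem_Iic (b := c),
      isGLB_iff_le_iff.1 hc x]

theorem exists_isLUB_insert (hsup : ∀ a b : α, ∃ c, IsLUB {a, b} c) (a : α) {s : Set α}
    (hs : s.Finite) : ∃ c, IsLUB (insert a s) c :=
  exists_isGLB_insert (α := αᵒᵈ) hsup a hs

theorem exists_interpolant (hsup : ∀ a b : α, ∃ c, IsLUB {a, b} c)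
    (hinf : ∀ a b : α, ∃ c, IsGLB {a, b} c) {D U : Set α} (hD : D.Finite) (hU : U.Finite)
    (hDU : ∀ d ∈ D, ∀ u ∈ U, d ≤ u) (y : α) :
    ∃ z, z ∈ upperBounds D ∧ z ∈ lowerBounds U ∧
      (∀ a ∈ lowerBounds U, a ≤ y → a ≤ z) ∧ ∀ b ∈ upperBounds D, y ≤ b → z ≤ b := by
  obtain ⟨w, hw⟩ := exists_isLUB_insert hsup y hD
  obtain ⟨z, hz⟩ := exists_isGLB_insert hinf w hU
  have hyw : y ≤ w := hw.1 (Set.mem_insert y D)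
  have hzw : z ≤ w := hz.1 (Set.mem_insert w U)
  refine ⟨z, fun d hd => hz.2 ?_, fun u hu => hz.1 (Set.mem_insert_of_mem w hu),
    fun a ha hay => hz.2 ?_, fun b hb hyb => hzw.trans (hw.2 ?_)⟩
  · exact Set.forall_mem_insert.2 ⟨hw.1 (Set.mem_insert_of_mem y hd), hDU d hd⟩
  · exact Set.forall_mem_insert.2 ⟨hay.trans hyw, ha⟩
  · exact Set.forall_mem_insert.2 ⟨hyb, hb⟩

/-- `y` splits the pair `(a, b)`, where `¬ a ≤ b`, if this non-inequality survives moving `a` down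
to some element below `y`, and also moving `b` up to some element above `y`. In a lattice it says
that neither `a ⊓ y ≤ b` nor `a ≤ b ⊔ y`. -/
def Splits (y a b : α) : Prop :=
  (∃ c, c ≤ a ∧ c ≤ y ∧ ¬ c ≤ b) ∧ ∃ c, b ≤ c ∧ y ≤ c ∧ ¬ a ≤ c

/-- A map is separating on a finite set `s` if it is monotone there and the images of two subsets
of `s` can be told apart whenever no element of the first lies below an element of the second. In a
lattice the elements `a` and `b` may be taken to be `S.inf f` and `T.sup f`. -/
structure IsSeparatingOn (f : P → α) (s : Finset P) : Prop where
  monotoneOn : MonotoneOn f s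
  separates : ∀ S ⊆ s, ∀ T ⊆ s, (∀ p ∈ S, ∀ q ∈ T, ¬ p ≤ q) →
    ∃ a b, (∀ p ∈ S, a ≤ f p) ∧ (∀ q ∈ T, f q ≤ b) ∧ ¬ a ≤ b

/-- `y` splits `f` on `s` if every two subsets of `s` that a separating map has to separate are
separated by some pair split by `y`. Such a `y` is the raw material for the value of `f` at a new
point. -/
def SplitsOn (y : α) (f : P → α) (s : Finset P) : Prop :=
  ∀ S ⊆ s, ∀ T ⊆ s, (∀ p ∈ S, ∀ q ∈ T, ¬ p ≤ q) →
    ∃ a b, (∀ p ∈ S, a ≤ f p) ∧ (∀ q ∈ T, f q ≤ b) ∧ Splits y a b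

namespace IsSeparatingOn

variable {f : P → α} {s : Finset P} {p q : P} {l : Filter α}

theorem empty (f : P → α) {a b : α} (hab : ¬ a ≤ b) : IsSeparatingOn f ∅ where
  monotoneOn := by simp [MonotoneOn]
  separates S hS T hT _ := by
    rw [Finset.subset_empty.1 hS, Finset.subset_empty.1 hT]
    exact ⟨a, b, by simp, by simp, hab⟩

theorem le_iff_le (hf : IsSeparatingOn f s) (hp : p ∈ s) (hq : q ∈ s) : f p ≤ f q ↔ p ≤ q := by
  refine ⟨fun h => ?_, hf.monotoneOn hp hq⟩
  by_contra hpq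
  obtain ⟨a, b, ha, hb, hab⟩ := hf.separates {p} (by simpa) {q} (by simpa) (by simpa)
  exact hab ((ha p (by simp)).trans (h.trans (hb q (by simp))))

theorem not_isBot (hf : IsSeparatingOn f s) (hp : p ∈ s) : ¬ IsBot (f p) := by
  obtain ⟨a, b, ha, -, hab⟩ := hf.separates {p} (by simpa) ∅ (by simp) (by simp)
  exact fun h => hab ((ha p (by simp)).trans (h b))

theorem not_isTop (hf : IsSeparatingOn f s) (hp : p ∈ s) : ¬ IsTop (f p) := by
  obtain ⟨a, b, -, hb, hab⟩ := hf.separates ∅ (by simp) {p} (by simpa) (by simp)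
  exact fun h => hab ((h a).trans (hb p (by simp)))

theorem eventually_splitsOn (hf : IsSeparatingOn f s)
    (hl : ∀ a b : α, ¬ a ≤ b → ∀ᶠ y in l, Splits y a b) :
    ∀ᶠ y in l, SplitsOn y f s := by
  simp_rw [SplitsOn, ← Finset.mem_powerset, Filter.eventually_all_finset,
    Filter.eventually_imp_distrib_left]
  intro S hS T hT hST
  obtain ⟨a, b, ha, hb, hab⟩ :=
    hf.separates S (Finset.mem_powerset.1 hS) T (Finset.mem_powerset.1 hT) hST
  exact (hl a b hab).mono fun y hy => ⟨a, b, ha, hb, hy⟩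

end IsSeparatingOn

namespace SplitsOn

variable {f g : P → α} {s S T : Finset P} {p : P} {y : α}

theorem congr (hy : SplitsOn y f s) (h : Set.EqOn f g s) : SplitsOn y g s := by
  intro S hS T hT hST
  obtain ⟨a, b, ha, hb, hab⟩ := hy S hS T hT hST
  exact ⟨a, b, fun q hq => h (hS hq) ▸ ha q hq, fun r hr => h (hT hr) ▸ hb r hr, hab⟩

theorem exists_le_and_separates (hy : SplitsOn y f s) (hS : S ⊆ s) (hT : T ⊆ s)
    (hST : ∀ q ∈ S, ∀ r ∈ T, ¬ q ≤ r) (hpT : ∀ r ∈ T, ¬ p ≤ r) :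
    ∃ a b, a ≤ y ∧ (∀ q ∈ s, p ≤ q → a ≤ f q) ∧ (∀ q ∈ S, a ≤ f q) ∧ (∀ r ∈ T, f r ≤ b) ∧
      ¬ a ≤ b := by
  classical
  have hUT : ∀ q ∈ S ∪ {q ∈ s | p ≤ q}, ∀ r ∈ T, ¬ q ≤ r := by
    intro q hq r hr hqr
    rcases Finset.mem_union.1 hq with hq | hq
    · exact hST q hq r hr hqr
    · exact hpT r hr ((Finset.mem_filter.1 hq).2.trans hqr)
  obtain ⟨a, b, ha, hb, ⟨c, hca, hcy, hcb⟩, -⟩ :=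
    hy _ (Finset.union_subset hS (Finset.filter_subset _ _)) T hT hUT
  exact ⟨c, b, hcy,
    fun q hq hpq => hca.trans (ha q (Finset.mem_union_right _ (Finset.mem_filter.2 ⟨hq, hpq⟩))),
    fun q hq => hca.trans (ha q (Finset.mem_union_left _ hq)), hb, hcb⟩

theorem exists_ge_and_separates (hy : SplitsOn y f s) (hS : S ⊆ s) (hT : T ⊆ s)
    (hST : ∀ q ∈ S, ∀ r ∈ T, ¬ q ≤ r) (hSp : ∀ q ∈ S, ¬ q ≤ p) :
    ∃ a b, y ≤ b ∧ (∀ r ∈ s, r ≤ p → f r ≤ b) ∧ (∀ q ∈ S, a ≤ f q) ∧ (∀ r ∈ T, f r ≤ b) ∧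
      ¬ a ≤ b := by
  classical
  have hSD : ∀ q ∈ S, ∀ r ∈ T ∪ {r ∈ s | r ≤ p}, ¬ q ≤ r := by
    intro q hq r hr hqr
    rcases Finset.mem_union.1 hr with hr | hr
    · exact hST q hq r hr hqr
    · exact hSp q hq (hqr.trans (Finset.mem_filter.1 hr).2)
  obtain ⟨a, b, ha, hb, -, ⟨c, hbc, hyc, hac⟩⟩ :=
    hy S hS _ (Finset.union_subset hT (Finset.filter_subset _ _)) hSD
  exact ⟨a, c, hyc,
    fun r hr hrp => (hb r (Finset.mem_union_right _ (Finset.mem_filter.2 ⟨hr, hrp⟩))).trans hbc,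
    ha, fun r hr => (hb r (Finset.mem_union_left _ hr)).trans hbc, hac⟩

end SplitsOn

namespace IsSeparatingOn

variable {f g : P → α} {s : Finset P} {p : P} {y : α}

theorem congr (hf : IsSeparatingOn f s) (h : Set.EqOn f g s) : IsSeparatingOn g s where
  monotoneOn := hf.monotoneOn.congr h
  separates S hS T hT hST := by
    obtain ⟨a, b, ha, hb, hab⟩ := hf.separates S hS T hT hST
    exact ⟨a, b, fun q hq => h (hS hq) ▸ ha q hq, fun r hr => h (hT hr) ▸ hb r hr, hab⟩

theorem insert_of_splitsOn [DecidableEq P] (hf : IsSeparatingOn f s) (hy : SplitsOn y f s)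
    (hle : ∀ q ∈ s, q ≤ p → f q ≤ f p) (hge : ∀ q ∈ s, p ≤ q → f p ≤ f q)
    (hlow : ∀ a ≤ y, (∀ q ∈ s, p ≤ q → a ≤ f q) → a ≤ f p)
    (hupp : ∀ b ≥ y, (∀ q ∈ s, q ≤ p → f q ≤ b) → f p ≤ b) :
    IsSeparatingOn f (insert p s) where
  monotoneOn q hq r hr hqr := by
    rw [Finset.coe_insert] at hq hr
    rcases hq with rfl | hq <;> rcases hr with rfl | hr
    · exact le_rfl
    · exact hge r hr hqr
    · exact hle q hq hqr
    · exact hf.monotoneOn hq hr hqr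
  separates S hS T hT hST := by
    by_cases hpS : p ∈ S
    · have hpT : p ∉ T := fun hpT => hST p hpS p hpT le_rfl
      obtain ⟨a, b, hay, hap, haS, hTb, hab⟩ := hy.exists_le_and_separates
        (Finset.subset_insert_iff.1 hS) ((Finset.subset_insert_iff_of_notMem hpT).1 hT)
        (fun q hq => hST q (Finset.mem_of_mem_erase hq)) (hST p hpS)
      rw [← Finset.insert_erase hpS]
      exact ⟨a, b, Finset.forall_mem_insert .. |>.2 ⟨hlow a hay hap, haS⟩, hTb, hab⟩
    · have hS' := (Finset.subset_insert_iff_of_notMem hpS).1 hS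
      by_cases hpT : p ∈ T
      · obtain ⟨a, b, hyb, hpb, haS, hTb, hab⟩ := hy.exists_ge_and_separates
          hS' (Finset.subset_insert_iff.1 hT)
          (fun q hq r hr => hST q hq r (Finset.mem_of_mem_erase hr)) (fun q hq => hST q hq p hpT)
        rw [← Finset.insert_erase hpT]
        exact ⟨a, b, haS, Finset.forall_mem_insert .. |>.2 ⟨hupp b hyb hpb, hTb⟩, hab⟩
      · exact hf.separates S hS' T ((Finset.subset_insert_iff_of_notMem hpT).1 hT) hST

theorem exists_insert [DecidableEq P] (hsup : ∀ a b : α, ∃ c, IsLUB {a, b} c)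
    (hinf : ∀ a b : α, ∃ c, IsGLB {a, b} c) (hf : IsSeparatingOn f s) (hy : SplitsOn y f s)
    (hp : p ∉ s) : ∃ g, Set.EqOn f g s ∧ IsSeparatingOn g (insert p s) := by
  have hDU : ∀ d ∈ f '' {q ∈ s | q ≤ p}, ∀ u ∈ f '' {q ∈ s | p ≤ q}, d ≤ u := by
    rintro _ ⟨q, hq, rfl⟩ _ ⟨r, hr, rfl⟩
    exact hf.monotoneOn hq.1 hr.1 (hq.2.trans hr.2)
  obtain ⟨z, hDz, hzU, hlow, hupp⟩ := exists_interpolant hsup hinf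
    ((s.finite_toSet.sep _).image f) ((s.finite_toSet.sep _).image f) hDU y
  have hfg : Set.EqOn f (Function.update f p z) s := fun q hq =>
    (Function.update_of_ne (ne_of_mem_of_not_mem hq hp) ..).symm
  simp only [mem_upperBounds, mem_lowerBounds, Set.forall_mem_image, Set.mem_ofPred_eq,
    and_imp] at hDz hzU hlow hupp
  refine ⟨_, hfg, (hf.congr hfg).insert_of_splitsOn (hy.congr hfg) ?_ ?_ ?_ ?_⟩ <;>
    rw [Function.update_self]
  · exact fun q hq hqp => hfg hq ▸ hDz hq hqp
  · exact fun q hq hpq => hfg hq ▸ hzU hq hpq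
  · exact fun a hay ha => hlow a (fun q hq hpq => (ha q hq hpq).trans_eq (hfg hq).symm) hay
  · exact fun b hyb hb => hupp b (fun q hq hqp => (hfg hq).trans_le (hb q hq hqp)) hyb

end IsSeparatingOn

/-- A finite stage in the construction of an embedding of `P` into `α`. Only the values of the map
on the domain matter. -/
structure PartialEmbedding (P α : Type*) [Preorder P] [Preorder α] where
  domain : Finset P
  toFun : P → α
  isSeparatingOn : IsSeparatingOn toFun domain

namespace PartialEmbedding

instance : Preorder (PartialEmbedding P α) where
  le x y := x.domain ⊆ y.domain ∧ Set.EqOn x.toFun y.toFun x.domain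
  le_refl x := ⟨subset_rfl, fun _ _ => rfl⟩
  le_trans _ _ _ hxy hyz := ⟨hxy.1.trans hyz.1, fun _ hp => (hxy.2 hp).trans (hyz.2 (hxy.1 hp))⟩

/-- The stages defined at `p`, cofinal because every stage extends to `p`. -/
def definedAt {l : Filter α} [l.NeBot] (hsup : ∀ a b : α, ∃ c, IsLUB {a, b} c)
    (hinf : ∀ a b : α, ∃ c, IsGLB {a, b} c) (hl : ∀ a b : α, ¬ a ≤ b → ∀ᶠ y in l, Splits y a b)
    (p : P) : Order.Cofinal (PartialEmbedding P α) where
  carrier := {x | p ∈ x.domain}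
  isCofinal x := by
    classical
    by_cases hp : p ∈ x.domain
    · exact ⟨x, hp, le_rfl⟩
    obtain ⟨y, hy⟩ := (x.isSeparatingOn.eventually_splitsOn hl).exists
    obtain ⟨g, hg, hgs⟩ := x.isSeparatingOn.exists_insert hsup hinf hy hp
    exact ⟨⟨insert p x.domain, g, hgs⟩, Finset.mem_insert_self p _, Finset.subset_insert p _, hg⟩

end PartialEmbedding

theorem exists_embedding_of_eventually_splits {l : Filter α} [l.NeBot]
    (hsup : ∀ a b : α, ∃ c, IsLUB {a, b} c) (hinf : ∀ a b : α, ∃ c, IsGLB {a, b} c)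
    (hl : ∀ a b : α, ¬ a ≤ b → ∀ᶠ y in l, Splits y a b) {a b : α} (hab : ¬ a ≤ b)
    (P : Type*) [Countable P] [Preorder P] :
    ∃ f : P → α, (∀ p, ¬ IsBot (f p) ∧ ¬ IsTop (f p)) ∧ ∀ p q, p ≤ q ↔ f p ≤ f q := by
  obtain ⟨_⟩ := nonempty_encodable P
  let D := PartialEmbedding.definedAt (P := P) hsup hinf hl
  let start : PartialEmbedding P α := ⟨∅, fun _ => a, .empty _ hab⟩
  let I := Order.idealOfCofinals start D
  choose x hxp hxI using Order.cofinal_meets_idealOfCofinals start D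
  refine ⟨fun p => (x p).toFun p, fun p => ⟨?_, ?_⟩, fun p q => ?_⟩
  · exact (x p).isSeparatingOn.not_isBot (hxp p)
  · exact (x p).isSeparatingOn.not_isTop (hxp p)
  · beta_reduce
    obtain ⟨z, -, hpz, hqz⟩ := I.directed _ (hxI p) _ (hxI q)
    rw [hpz.2 (hxp p), hqz.2 (hxp q),
      z.isSeparatingOn.le_iff_le (hpz.1 (hxp p)) (hqz.1 (hxp q))]

end Order

/-! ### Shift graphs -/

section Shift

variable {α : Type*} [Preorder α] {n : ℕ}

/-- The arcs of the shift digraph on strictly increasing tuples: delete the first entry and append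
one at the end. -/
def ShiftRel (u v : Fin (n + 1) → α) : Prop :=
  ∃ w : Fin (n + 2) → α, StrictMono w ∧ Fin.init w = u ∧ Fin.tail w = v

namespace ShiftRel

variable {u v : Fin (n + 1) → α}

theorem strictMono_left (h : ShiftRel u v) : StrictMono u := by
  obtain ⟨w, hw, rfl, -⟩ := h
  exact hw.comp Fin.strictMono_castSucc

theorem strictMono_right (h : ShiftRel u v) : StrictMono v := by
  obtain ⟨w, hw, -, rfl⟩ := h
  exact hw.comp Fin.strictMono_succ

theorem apply_eq (h : ShiftRel u v) {i j : Fin (n + 1)} (hij : (i : ℕ) = j + 1) : v j = u i := by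
  obtain ⟨w, -, rfl, rfl⟩ := h
  exact congrArg w (Fin.ext hij.symm)

theorem ne (h : ShiftRel u v) : u ≠ v := by
  obtain ⟨w, hw, rfl, rfl⟩ := h
  exact fun he => (hw (Fin.castSucc_lt_succ (i := 0))).ne (congrFun he 0)

end ShiftRel

/-- The shift graph. Its vertices are all tuples; those that are not strictly increasing are
isolated and do no harm. -/
def shiftGraph (α : Type*) [Preorder α] (n : ℕ) : SimpleGraph (Fin (n + 1) → α) :=
  SimpleGraph.fromRel ShiftRel

theorem exists_shiftRel_map_eq (n : ℕ) (C : Type*) [Finite C] :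
    ∃ M, ∀ c : (Fin (n + 1) → Fin M) → C, ∃ u v, ShiftRel u v ∧ c u = c v := by
  induction n generalizing C with
  | zero =>
    have := Fintype.ofFinite C
    refine ⟨Fintype.card C + 1, fun c => ?_⟩
    obtain ⟨a, b, hab, hc⟩ :=
      Fintype.exists_ne_map_eq_of_card_lt (fun a => c fun _ => a) (by simp)
    wlog hlt : a < b generalizing a b
    · exact this b a hab.symm hc.symm (hab.lt_or_gt.resolve_left hlt)
    refine ⟨fun _ => a, fun _ => b, ⟨![a, b], by simpa, ?_, ?_⟩, hc⟩ <;>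
    exact funext (Fin.forall_fin_one.2 rfl)
  | succ n ih =>
    -- Colour a tuple by the set of colours of its extensions by one entry.
    obtain ⟨M, hM⟩ := ih (Set C)
    refine ⟨M, fun c => ?_⟩
    obtain ⟨_, _, ⟨w, hw, rfl, rfl⟩, hc⟩ :=
      hM fun u => {x | ∃ w, StrictMono w ∧ Fin.init w = u ∧ c w = x}
    obtain ⟨w', hw', hww', hcw⟩ := hc.subset ⟨w, hw, rfl, rfl⟩
    refine ⟨w, w', ⟨Fin.cons (w 0) w', hw'.vecCons ?_, ?_, Fin.tail_cons _ _⟩, hcw.symm⟩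
    · exact (hw Fin.zero_lt_one).trans_eq (congrFun hww' 0).symm
    · exact funext <| Fin.cases rfl fun i => congrFun hww' i

theorem exists_fin_intCast_eq {m : ℕ} {k : ℤ} (hk : 0 ≤ k) (hkm : k < m) :
    ∃ i : Fin m, (i : ℤ) = k :=
  ⟨⟨k.toNat, by omega⟩, Int.toNat_of_nonneg hk⟩

theorem exists_apply_eq_of_shiftGraph_walk {u v : Fin (n + 1) → α}
    (p : (shiftGraph α n).Walk u v) :
    ∃ h : ℤ, |h| ≤ p.length ∧ Even (h - p.length) ∧ ∀ i j : Fin (n + 1), (i : ℤ) = j + h →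
      p.length ≤ j → j + p.length ≤ n → v j = u i := by
  induction p with
  | nil => exact ⟨0, by simp, by simp, fun i j hij _ _ => congrArg _ (by omega)⟩
  | @cons u x v hux p ih =>
    obtain ⟨h, hp, hpar, hshift⟩ := ih
    rw [abs_le] at hp
    simp only [SimpleGraph.Walk.length_cons, Nat.cast_add, Nat.cast_one, abs_le]
    rcases hux.2 with hux | hxu
    · refine ⟨h + 1, by omega, by grind, fun i j hij hj hjn => ?_⟩
      obtain ⟨k, hk⟩ := exists_fin_intCast_eq (m := n + 1) (k := j + h) (by omega) (by omega)
      exact (hshift k j hk (by omega) (by omega)).trans (hux.apply_eq (by omega))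
    · refine ⟨h - 1, by omega, by grind, fun i j hij hj hjn => ?_⟩
      obtain ⟨k, hk⟩ := exists_fin_intCast_eq (m := n + 1) (k := j + h) (by omega) (by omega)
      exact (hshift k j hk (by omega) (by omega)).trans (hxu.apply_eq (by omega)).symm

theorem strictMono_of_shiftGraph_adj {u v : Fin (n + 1) → α} (h : (shiftGraph α n).Adj u v) :
    StrictMono u :=
  h.2.elim ShiftRel.strictMono_left ShiftRel.strictMono_right

theorem even_length_of_shiftGraph_closed_walk {u : Fin (n + 1) → α}
    (p : (shiftGraph α n).Walk u u) (hp : 2 * p.length ≤ n) : Even p.length := by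
  obtain ⟨h, hh, hpar, hshift⟩ := exists_apply_eq_of_shiftGraph_walk p
  by_cases hnil : p.Nil
  · simp [SimpleGraph.Walk.length_eq_zero_iff.2 hnil]
  rw [abs_le] at hh
  obtain ⟨j, hj⟩ : ∃ j : Fin (n + 1), (j : ℕ) = p.length := ⟨⟨p.length, by omega⟩, rfl⟩
  obtain ⟨i, hi⟩ := exists_fin_intCast_eq (m := n + 1) (k := j + h) (by omega) (by omega)
  have hij : j = i := (strictMono_of_shiftGraph_adj (p.adj_snd hnil)).injective
    (hshift i j hi (by omega) (by omega))
  obtain rfl : h = 0 := by omega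
  simpa using hpar

end Shift

theorem colorable_two_of_even_closed_walks {V : Type*} [Fintype V] {G : SimpleGraph V}
    (h : ∀ (u : V) (p : G.Walk u u), p.length < 2 * Fintype.card V → Even p.length) :
    G.Colorable 2 := by
  refine SimpleGraph.colorable_iff_forall_connectedComponent.2 fun c => ?_
  obtain ⟨o, ho⟩ := c.nonempty_supp
  have hpath (v : c.supp) : ∃ p : G.Walk o v, p.IsPath :=
    (SimpleGraph.ConnectedComponent.exact (ho.trans v.2.symm)).exists_isPath
  choose p hp using hpath
  have hcol : c.toSimpleGraph.Coloring Bool := .mk (fun v => decide (Even (p v).length))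
    fun {u v} (huv : G.Adj u v) heq => by
      have hlen : (((p u).concat huv).append (p v).reverse).length =
          (p u).length + 1 + (p v).length := by simp
      have heven := h o (((p u).concat huv).append (p v).reverse) (by
        have := (hp u).length_lt
        have := (hp v).length_lt
        lia)
      rw [hlen] at heven
      rw [decide_eq_decide] at heq
      grind
  exact hcol.colorable

theorem shiftGraph_induce_colorable_two {α : Type*} [Preorder α] {n : ℕ}
    {s : Set (Fin (n + 1) → α)} [Fintype s] (hs : 4 * Fintype.card s ≤ n) :
    ((shiftGraph α n).induce s).Colorable 2 := by
  refine colorable_two_of_even_closed_walks fun u p hp => ?_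
  let q := p.map (SimpleGraph.Embedding.induce s).toHom
  have hq : q.length = p.length := SimpleGraph.Walk.length_map _ p
  exact hq ▸ even_length_of_shiftGraph_closed_walk q (by omega)

theorem exists_not_colorable_forall_induce_colorable_two (N : ℕ) :
    ∃ (V : Type) (_ : Fintype V) (K : SimpleGraph V), ¬ K.Colorable N ∧
      ∀ s : Finset V, s.card ≤ N → (K.induce (s : Set V)).Colorable 2 := by
  obtain ⟨M, hM⟩ := exists_shiftRel_map_eq (4 * N) (Fin N)
  refine ⟨_, inferInstance, shiftGraph (Fin M) (4 * N), ?_, fun s hs => ?_⟩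
  · rintro ⟨c⟩
    obtain ⟨u, v, huv, hc⟩ := hM c
    exact c.valid ⟨huv.ne, .inl huv⟩ hc
  · exact shiftGraph_induce_colorable_two (by simpa using hs)

/-! ### Sums and products of graphs -/

section Graph

variable {U V W : Type*} {A : SimpleGraph U} {B : SimpleGraph V} {K : SimpleGraph W}

/-- The categorical (tensor) product of two graphs, their product with respect to homomorphisms. -/
def tensor (G : SimpleGraph V) (H : SimpleGraph W) : SimpleGraph (V × W) where
  Adj a b := G.Adj a.1 b.1 ∧ H.Adj a.2 b.2
  symm := ⟨fun _ _ h => ⟨h.1.symm, h.2.symm⟩⟩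
  loopless := ⟨fun _ h => h.1.ne rfl⟩

theorem nonempty_hom_tensor_iff :
    Nonempty (A →g tensor K B) ↔ Nonempty (A →g K) ∧ Nonempty (A →g B) where
  mp := fun ⟨f⟩ => ⟨⟨fun u => (f u).1, fun h => (f.map_adj h).1⟩,
    ⟨fun u => (f u).2, fun h => (f.map_adj h).2⟩⟩
  mpr := fun ⟨⟨f⟩, ⟨g⟩⟩ => ⟨fun u => (f u, g u), fun h => ⟨f.map_adj h, g.map_adj h⟩⟩

theorem nonempty_sum_hom_iff :
    Nonempty (K ⊕g B →g A) ↔ Nonempty (K →g A) ∧ Nonempty (B →g A) where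
  mp := fun ⟨f⟩ => ⟨⟨f.comp SimpleGraph.Embedding.sumInl.toHom⟩,
    ⟨f.comp SimpleGraph.Embedding.sumInr.toHom⟩⟩
  mpr := fun ⟨⟨f⟩, ⟨g⟩⟩ => ⟨Sum.elim f g, fun {a b} h => by
    rcases a with a | a <;> rcases b with b | b
    · exact f.map_adj h
    · exact absurd h Bool.false_ne_true
    · exact absurd h Bool.false_ne_true
    · exact g.map_adj h⟩

theorem nonempty_hom_of_tensor_hom [Fintype U] [Fintype V]
    (hK : ¬ K.Colorable (Fintype.card V ^ Fintype.card U)) (f : tensor K A →g B) :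
    Nonempty (A →g B) := by
  classical
  by_contra hAB
  refine hK ?_
  rw [← Fintype.card_fun]
  -- If `f (k, ·)` and `f (l, ·)` agree for adjacent `k` and `l`, they are a homomorphism `A →g B`.
  refine (SimpleGraph.Coloring.mk (fun k u => f (k, u)) fun {k l} hkl heq => hAB ?_).colorable
  refine ⟨fun u => f (k, u), fun {u v} huv => ?_⟩
  rw [congrFun heq v]
  exact f.map_adj ⟨hkl, huv⟩

theorem nonempty_hom_of_range_subset (f : A →g B) (e : K ↪g B) (h : Set.range f ⊆ Set.range e) :
    Nonempty (A →g K) := by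
  choose g hg using fun u => h (Set.mem_range_self u)
  exact ⟨g, fun {u v} huv => e.map_adj_iff.1 (by rw [hg, hg]; exact f.map_adj huv)⟩

theorem nonempty_hom_of_hom_sum [Fintype U]
    (hK : ∀ s : Finset W, s.card ≤ Fintype.card U → (K.induce (s : Set W)).Colorable 2)
    (hB : Nonempty ((⊤ : SimpleGraph (Fin 2)) →g B)) (f : A →g K ⊕g B) : Nonempty (A →g B) := by
  classical
  let s : Finset W := (Finset.univ.image f).toLeft
  have hs : s.card ≤ Fintype.card U := Finset.card_toLeft_le.trans Finset.card_image_le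
  obtain ⟨g⟩ : Nonempty (A →g K.induce (s : Set W) ⊕g B) := by
    refine nonempty_hom_of_range_subset f
      ((SimpleGraph.Embedding.induce (s : Set W)).sum .refl) ?_
    rintro _ ⟨u, rfl⟩
    rcases hu : f u with w | b
    · exact ⟨.inl ⟨w, by simp [s, ← hu]⟩, rfl⟩
    · exact ⟨.inr b, rfl⟩
  obtain ⟨c⟩ := hK s hs
  obtain ⟨h⟩ := nonempty_sum_hom_iff.2 ⟨hB.map (·.comp c), ⟨.id⟩⟩
  exact ⟨h.comp g⟩

theorem nonempty_top_hom_iff_ne_bot : Nonempty ((⊤ : SimpleGraph (Fin 2)) →g B) ↔ B ≠ ⊥ := by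
  rw [SimpleGraph.ne_bot_iff_exists_adj]
  refine ⟨fun ⟨f⟩ => ⟨f 0, f 1, f.map_adj (by simp)⟩, fun ⟨v, w, h⟩ => ⟨![v, w], ?_⟩⟩
  simp [Fin.forall_fin_two, h, h.symm]

end Graph

/-! ### The homomorphism order -/

/-- A finite graph, bundled with its vertex type; the carrier of the homomorphism order, which is
only a preorder because homomorphically equivalent graphs are not identified. -/
structure FinGraph where
  V : Type
  [fintype : Fintype V]
  graph : SimpleGraph V

namespace FinGraph

attribute [instance] fintype

instance : Preorder FinGraph where
  le A B := Nonempty (A.graph →g B.graph)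
  le_refl _ := ⟨.id⟩
  le_trans _ _ _ := fun ⟨f⟩ ⟨g⟩ => ⟨g.comp f⟩

/-- The supremum in the homomorphism order. -/
def sum (A B : FinGraph) : FinGraph := ⟨A.V ⊕ B.V, A.graph ⊕g B.graph⟩

/-- The infimum in the homomorphism order. -/
def prod (A B : FinGraph) : FinGraph := ⟨A.V × B.V, tensor A.graph B.graph⟩

/-- The complete graph on two vertices: `K₂ ≤ A` says that `A` has an edge. -/
def K₂ : FinGraph := ⟨Fin 2, ⊤⟩

variable {A B X : FinGraph}

theorem sum_le_iff : A.sum B ≤ X ↔ A ≤ X ∧ B ≤ X := nonempty_sum_hom_iff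

theorem le_prod_iff : X ≤ A.prod B ↔ X ≤ A ∧ X ≤ B := nonempty_hom_tensor_iff

theorem K₂_le_iff : K₂ ≤ A ↔ A.graph ≠ ⊥ := nonempty_top_hom_iff_ne_bot

theorem le_sum_left : A ≤ A.sum B := (sum_le_iff.1 le_rfl).1

theorem le_sum_right : B ≤ A.sum B := (sum_le_iff.1 le_rfl).2

theorem prod_le_left : A.prod B ≤ A := (le_prod_iff.1 le_rfl).1

theorem prod_le_right : A.prod B ≤ B := (le_prod_iff.1 le_rfl).2

theorem exists_eventually_not_prod_le_and_not_le_sum :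
    ∃ K : ℕ → FinGraph, ∀ X Y : FinGraph, K₂ ≤ Y → ¬ X ≤ Y →
      ∀ᶠ n in Filter.atTop, ¬ (K n).prod X ≤ Y ∧ ¬ X ≤ (K n).sum Y := by
  choose V _ K hcol hbip using exists_not_colorable_forall_induce_colorable_two
  refine ⟨fun n => ⟨V n, K n⟩, fun X Y hY hXY => ?_⟩
  filter_upwards [Filter.eventually_ge_atTop (Fintype.card Y.V ^ Fintype.card X.V),
    Filter.eventually_ge_atTop (Fintype.card X.V)] with n hcard hX
  refine ⟨fun ⟨f⟩ => hXY ?_, fun ⟨f⟩ => hXY ?_⟩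
  · exact nonempty_hom_of_tensor_hom (fun h => hcol n (h.mono hcard)) f
  · exact nonempty_hom_of_hom_sum (fun s hs => hbip n s (hs.trans hX)) hY f

theorem exists_isLUB_Icc (X Y : Set.Icc A B) : ∃ Z, IsLUB {X, Y} Z :=
  ⟨⟨X.1.sum Y.1, X.2.1.trans le_sum_left, sum_le_iff.2 ⟨X.2.2, Y.2.2⟩⟩,
    isLUB_iff_le_iff.2 fun Z => by
      simpa [upperBounds_insert] using! sum_le_iff⟩

theorem exists_isGLB_Icc (X Y : Set.Icc A B) : ∃ Z, IsGLB {X, Y} Z :=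
  ⟨⟨X.1.prod Y.1, le_prod_iff.2 ⟨X.2.1, Y.2.1⟩, prod_le_left.trans X.2.2⟩,
    isGLB_iff_le_iff.2 fun Z => by
      simpa [lowerBounds_insert] using! le_prod_iff⟩

theorem splits_sum_prod {K : FinGraph} {X Y : Set.Icc A B} (hAB : A ≤ B)
    (hlow : ¬ K.prod X ≤ Y) (hupp : ¬ X ≤ K.sum Y) :
    Splits (⟨A.sum (K.prod B), le_sum_left, sum_le_iff.2 ⟨hAB, prod_le_right⟩⟩ : Set.Icc A B)
      X Y := by
  constructor
  · have hX : A.sum (K.prod X) ≤ X := sum_le_iff.2 ⟨X.2.1, prod_le_right⟩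
    have hKX : K.prod X ≤ K.prod B := le_prod_iff.2 ⟨prod_le_left, prod_le_right.trans X.2.2⟩
    exact ⟨⟨_, le_sum_left, hX.trans X.2.2⟩, hX,
      sum_le_iff.2 ⟨le_sum_left, hKX.trans le_sum_right⟩, fun h => hlow (le_sum_right.trans h)⟩
  · have hY : Y.1.sum (K.prod B) ≤ K.sum Y :=
      sum_le_iff.2 ⟨le_sum_right, prod_le_left.trans le_sum_left⟩
    exact ⟨⟨_, Y.2.1.trans le_sum_left, sum_le_iff.2 ⟨Y.2.2, prod_le_right⟩⟩, le_sum_left,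
      sum_le_iff.2 ⟨Y.2.1.trans le_sum_left, le_sum_right⟩, fun h => hupp (le_trans h hY)⟩

theorem exists_embedding_Icc (hA : K₂ ≤ A) (hAB : A ≤ B) (hBA : ¬ B ≤ A)
    (P : Type*) [Countable P] [Preorder P] :
    ∃ H : P → FinGraph, (∀ p, A ≤ H p ∧ H p ≤ B ∧ ¬ H p ≤ A ∧ ¬ B ≤ H p) ∧
      ∀ p q, p ≤ q ↔ H p ≤ H q := by
  obtain ⟨K, hK⟩ := exists_eventually_not_prod_le_and_not_le_sum
  let y (n : ℕ) : Set.Icc A B :=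
    ⟨A.sum ((K n).prod B), le_sum_left, sum_le_iff.2 ⟨hAB, prod_le_right⟩⟩
  have hy : ∀ X Y : Set.Icc A B, ¬ X ≤ Y → ∀ᶠ Z in Filter.atTop.map y, Splits Z X Y :=
    fun X Y hXY => (hK X Y (hA.trans Y.2.1) hXY).mono fun n hn => splits_sum_prod hAB hn.1 hn.2
  obtain ⟨H, hH, hle⟩ := exists_embedding_of_eventually_splits exists_isLUB_Icc exists_isGLB_Icc hy
    (a := ⟨B, hAB, le_rfl⟩) (b := ⟨A, le_rfl, hAB⟩) hBA P
  exact ⟨fun p => H p, fun p => ⟨(H p).2.1, (H p).2.2, fun h => (hH p).1 fun Z => h.trans Z.2.1,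
    fun h => (hH p).2 fun Z => Z.2.2.trans h⟩, hle⟩

end FinGraph

open FinGraph in
theorem hom_order_fractal_general {V₁ V₂ : Type} [Finite V₁] [Finite V₂]
    (G₁ : SimpleGraph V₁) (G₂ : SimpleGraph V₂)
    (h₁₂ : Nonempty (G₁ →g G₂)) (h₂₁ : ¬ Nonempty (G₂ →g G₁))
    (hgap : ¬ (G₁.edgeSet = ∅ ∧ G₂.Colorable 2))
    (P : Type*) [Countable P] [Preorder P] :
    ∃ (W : P → Type) (_ : ∀ p, Fintype (W p)) (H : ∀ p, SimpleGraph (W p)),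
      (∀ p : P, Nonempty (G₁ →g H p) ∧ Nonempty (H p →g G₂) ∧
        ¬ Nonempty (H p →g G₁) ∧ ¬ Nonempty (G₂ →g H p)) ∧
      (∀ p q : P, p ≤ q ↔ Nonempty (H p →g H q)) := by
  cases nonempty_fintype V₁
  cases nonempty_fintype V₂
  suffices ∃ H : P → FinGraph,
      (∀ p, ⟨V₁, G₁⟩ ≤ H p ∧ H p ≤ ⟨V₂, G₂⟩ ∧ ¬ H p ≤ ⟨V₁, G₁⟩ ∧ ¬ ⟨V₂, G₂⟩ ≤ H p) ∧
        ∀ p q, p ≤ q ↔ H p ≤ H q from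
    let ⟨H, hH, hle⟩ := this
    ⟨fun p => (H p).V, fun p => (H p).fintype, fun p => (H p).graph, hH, hle⟩
  by_cases hG₁ : G₁ = ⊥
  · have hG₂ : ¬ G₂.Colorable 2 := fun h => hgap ⟨SimpleGraph.edgeSet_eq_empty.2 hG₁, h⟩
    have hK₂ : K₂ ≤ ⟨V₂, G₂⟩ := K₂_le_iff.2 fun h =>
      hG₂ ((SimpleGraph.colorable_one_iff.2 h).mono one_le_two)
    obtain ⟨H, hH, hle⟩ := exists_embedding_Icc le_rfl hK₂ hG₂ P
    refine ⟨H, fun p => ⟨?_, (hH p).2.1, fun h => ?_, (hH p).2.2.2⟩, hle⟩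
    · obtain ⟨f⟩ := (hH p).1
      exact hG₁ ▸ ⟨fun _ => f (0 : Fin 2), False.elim⟩
    · exact K₂_le_iff.1 ((hH p).1.trans h) hG₁
  · exact exists_embedding_Icc (K₂_le_iff.2 hG₁) h₁₂ h₂₁ P

end HomOrder

/-- Fractal property of the homomorphism order: every non-gap interval is
universal, i.e. every countable partial order embeds into it. -/
theorem hom_order_fractal {V₁ V₂ : Type} [Fintype V₁] [Fintype V₂] [Nonempty V₁]
    (G₁ : SimpleGraph V₁) (G₂ : SimpleGraph V₂)
    (h₁₂ : Nonempty (G₁ →g G₂)) (h₂₁ : ¬ Nonempty (G₂ →g G₁))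
    (hgap : ¬ (G₁.edgeSet = ∅ ∧ G₂.Colorable 2))
    (P : Type*) [Countable P] [PartialOrder P] :
    ∃ (W : P → Type) (_ : ∀ p, Fintype (W p)) (H : ∀ p, SimpleGraph (W p)),
      (∀ p : P, Nonempty (G₁ →g H p) ∧ Nonempty (H p →g G₂) ∧
        ¬ Nonempty (H p →g G₁) ∧ ¬ Nonempty (G₂ →g H p)) ∧
      (∀ p q : P, p ≤ q ↔ Nonempty (H p →g H q)) :=
  HomOrder.hom_order_fractal_general G₁ G₂ h₁₂ h₂₁ hgap P
end

section
/- (Sparse Incomparability Lemma.) Let l be a positive integer and let G₁ and G₂ be finite simple non-bipartite graphs with G₁ ⟶ G₂ and not G₂ ⟶ G₁. Then there exists a finite connected simple graph F such that: F and G₁ are homomorphism-incomparable (not F ⟶ G₁ and not G₁ ⟶ F); F ⟶ G₂ and not G₂ ⟶ F; and F has girth at least l (F contains no cycle of length less than l). -/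
open Finset SimpleGraph

/-!
If `G₂` does not map to `G₁`, then every vertex map from a blow-up of `G₂` to `G₁`, being constant
on a positive proportion of each part, sends all edges between two such large sets to non-edges.
Let `F` be a subgraph of the blow-up with bounded degree, girth at least `l` and few enough edges
that almost all vertices are unsaturated. Then a positive proportion of these edges joins
unsaturated vertices at distance at least `l` in `F`, so by averaging some such edge, when added to
`F`, destroys a fixed proportion of the homomorphisms from `F` to `G₁`. The degree bound can be
chosen so large that this goes on until fewer than one homomorphism is left.

A homomorphism from `G₁` or `G₂` to a graph of girth exceeding their orders has acyclic image and
hence a bipartite source. For infinite `G₂`, compactness supplies a finite subgraph that already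
does not map to `G₁`.
-/

section Girth

variable {V W : Type*}

lemma edist_deleteEdges_lt_length {G : SimpleGraph V} {a u w : V} {c : G.Walk a a}
    (hc : c.IsTrail) (huw : s(u, w) ∈ c.edges) :
    (G.deleteEdges {s(u, w)}).edist u w < c.length := by
  wlog hsub : (c.adj_of_mem_edges huw).toWalk.IsSubwalk c generalizing u w
  · have hwu : s(w, u) ∈ c.edges := Sym2.eq_swap ▸ huw
    rw [edist_comm, Sym2.eq_swap]
    exact this hwu
      (((Walk.isSubwalk_toWalk_iff_mem_edges (c.adj_of_mem_edges huw)).2 huw).resolve_left hsub)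
  obtain ⟨p, r, hcpr⟩ := hsub
  have hedge : s(u, w) ∉ (r.append p).edges := by
    have hnodup := hc.edges_nodup
    simp only [hcpr, Walk.edges_append, Adj.toWalk, Walk.edges_cons, Walk.edges_nil,
      List.append_assoc, List.singleton_append, List.nodup_middle, List.nodup_cons] at hnodup
    simpa only [Walk.edges_append, List.mem_append, or_comm] using hnodup.1
  calc (G.deleteEdges {s(u, w)}).edist u w
      ≤ (((r.append p).toDeleteEdge _ hedge).reverse.length : ℕ∞) := edist_le _
    _ < c.length := by
        rw [hcpr]
        simp only [Walk.length_reverse, Walk.length_transfer, Walk.length_append, Adj.toWalk,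
          Walk.length_cons, Walk.length_nil]
        norm_cast
        lia

lemma le_egirth_sup_edge {F : SimpleGraph W} {l : ℕ∞} {u w : W} (hF : l ≤ F.egirth)
    (huw : l ≤ F.edist u w) : l ≤ (F ⊔ edge u w).egirth := by
  have hdel : (F ⊔ edge u w).deleteEdges {s(u, w)} ≤ F := by
    simp [deleteEdges_sup]
  refine le_egirth.2 fun a c hc => ?_
  by_cases hmem : s(u, w) ∈ c.edges
  · exact huw.trans ((edist_anti hdel).trans (edist_deleteEdges_lt_length hc.isTrail hmem).le)
  · have hcF : ∀ e ∈ c.edges, e ∈ F.edgeSet := fun e he =>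
      edgeSet_mono hdel <| by
        simpa only [edgeSet_deleteEdges] using
          ⟨c.edges_subset_edgeSet he, fun h => hmem (h ▸ he)⟩
    simpa only [Walk.length_transfer] using le_egirth.1 hF a _ (hc.transfer hcF)

lemma isAcyclic_of_card_lt_egirth [Finite V] {G : SimpleGraph V}
    (hG : (Nat.card V : ℕ∞) < G.egirth) : G.IsAcyclic := by
  have := Fintype.ofFinite V
  intro v c hc
  have hlen : c.length ≤ Nat.card V := by
    simpa using hc.support_nodup.length_le_card
  exact (hG.trans_le (egirth_le_length hc)).not_ge (mod_cast hlen)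

lemma colorable_two_of_hom_of_card_lt_egirth [Finite V] {G : SimpleGraph V} {F : SimpleGraph W}
    (g : G →g F) (hF : (Nat.card V : ℕ∞) < F.egirth) : G.Colorable 2 := by
  let image : SimpleGraph (Set.range g) := F.induce (Set.range g)
  have hcard : (Nat.card (Set.range g) : ℕ∞) ≤ Nat.card V :=
    mod_cast Finite.card_range_le g
  have hgirth : F.egirth ≤ image.egirth :=
    IsContained.egirth_le ⟨(Embedding.induce _).toCopy⟩
  have hacyclic : image.IsAcyclic :=
    isAcyclic_of_card_lt_egirth (hcard.trans_lt (hF.trans_le hgirth))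
  let toImage : G →g image := ⟨fun v => ⟨g v, v, rfl⟩, fun h => g.map_rel h⟩
  exact hacyclic.colorable_two.of_hom toImage

lemma nonempty_hom_of_colorable_two {G : SimpleGraph V} {H : SimpleGraph W} (hG : G.Colorable 2)
    (hH : H ≠ ⊥) : Nonempty (G →g H) := by
  obtain ⟨a, b, hab⟩ := ne_bot_iff_exists_adj.1 hH
  obtain ⟨c⟩ := hG
  refine ⟨fun v => if c v = 0 then a else b, fun {v w} hvw => ?_⟩
  have hne : c v ≠ c w := c.valid hvw
  grind [hab.symm]

end Girth

section Sparse

variable {V W : Type*}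

lemma exists_card_mul_le_card_mul_card_bipartiteBelow {α β : Type*} {s : Finset α} {t : Finset β}
    (r : α → β → Prop) [∀ a b, Decidable (r a b)] {m : ℕ} (ht : t.Nonempty)
    (hm : ∀ a ∈ s, m ≤ #(t.bipartiteAbove r a)) :
    ∃ b ∈ t, #s * m ≤ #t * #(s.bipartiteBelow r b) := by
  obtain ⟨b, hb, hmax⟩ := t.exists_max_image (fun b => #(s.bipartiteBelow r b)) ht
  exact ⟨b, hb, card_mul_le_card_mul r hm hmax⟩

open Classical in
lemma card_ball_le [Fintype W] {F : SimpleGraph W} {Δ : ℕ} (hΔ : ∀ v, F.degree v ≤ Δ)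
    (u : W) (r : ℕ) : #(F.ball u r).toFinset ≤ (Δ + 1) ^ r := by
  induction r generalizing u with
  | zero => simp
  | succ r ih =>
    have hsub : (F.ball u (r + 1 : ℕ)).toFinset ⊆
        insert u ((F.neighborFinset u).biUnion fun v => (F.ball v r).toFinset) := by
      intro w hw
      rw [Set.mem_toFinset, mem_ball, edist_comm] at hw
      obtain ⟨p, hp⟩ := exists_walk_of_edist_ne_top hw.ne_top
      cases p with
      | nil => exact mem_insert_self _ _
      | cons huv p =>
        refine mem_insert_of_mem (mem_biUnion.2 ⟨_, (mem_neighborFinset ..).2 huv, ?_⟩)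
        rw [Set.mem_toFinset, mem_ball, edist_comm]
        rw [← hp, Walk.length_cons, Nat.cast_lt, Nat.succ_lt_succ_iff] at hw
        exact (edist_le p).trans_lt (mod_cast hw)
    calc #(F.ball u (r + 1 : ℕ)).toFinset
        ≤ #((F.neighborFinset u).biUnion fun v => (F.ball v r).toFinset) + 1 :=
          (card_le_card hsub).trans (card_insert_le _ _)
      _ ≤ F.degree u * (Δ + 1) ^ r + 1 := by
          gcongr
          exact card_biUnion_le_card_mul _ _ _ fun v _ => ih v
      _ ≤ Δ * (Δ + 1) ^ r + (Δ + 1) ^ r := by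
          gcongr
          · exact hΔ u
          · exact Nat.one_le_pow _ _ Δ.succ_pos
      _ = (Δ + 1) ^ (r + 1) := by ring

lemma degree_sup_edge_le (F : SimpleGraph W) (u w v : W) [Fintype (F.neighborSet v)]
    {_ : Fintype ((F ⊔ edge u w).neighborSet v)} :
    (F ⊔ edge u w).degree v ≤ F.degree v + 1 := by
  classical
  have hsub : (F ⊔ edge u w).neighborFinset v ⊆
      insert (if v = u then w else u) (F.neighborFinset v) := by
    intro x hx
    simp only [mem_neighborFinset, sup_adj, edge_adj, mem_insert] at hx ⊢
    grind
  exact (card_le_card hsub).trans (card_insert_le _ _)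

lemma degree_sup_edge_of_ne (F : SimpleGraph W) {u w v : W} (hu : v ≠ u) (hw : v ≠ w)
    [Fintype (F.neighborSet v)] {_ : Fintype ((F ⊔ edge u w).neighborSet v)} :
    (F ⊔ edge u w).degree v = F.degree v := by
  have hset : (F ⊔ edge u w).neighborSet v = F.neighborSet v := by
    ext x
    simp [edge_adj, hu, hw]
  simpa only [card_neighborSet_eq_degree] using Fintype.card_congr (Equiv.setCongr hset)

lemma card_edgeFinset_sup_edge_le (F : SimpleGraph W) (u w : W) [Fintype F.edgeSet]
    {_ : Fintype (F ⊔ edge u w).edgeSet} :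
    #(F ⊔ edge u w).edgeFinset ≤ #F.edgeFinset + 1 := by
  classical
  have hsub : (F ⊔ edge u w).edgeFinset ⊆ insert s(u, w) F.edgeFinset := by
    intro e he
    simp only [mem_edgeFinset, edgeSet_sup, Set.mem_union, mem_insert] at he ⊢
    exact he.symm.imp_left fun h => edgeSet_edge_subset h
  exact (card_le_card hsub).trans (card_insert_le _ _)

open Classical in
lemma card_filter_le_degree_mul_le [Fintype W] (F : SimpleGraph W) (d : ℕ) :
    #{v | d ≤ F.degree v} * d ≤ 2 * #F.edgeFinset :=
  calc #{v | d ≤ F.degree v} * d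
      ≤ ∑ v with d ≤ F.degree v, F.degree v :=
        card_nsmul_le_sum _ _ _ fun _ hv => (mem_filter.1 hv).2
    _ ≤ ∑ v, F.degree v := sum_le_sum_of_subset (filter_subset _ _)
    _ = 2 * #F.edgeFinset := F.sum_degrees_eq_twice_card_edges

/-- Homomorphisms from `F` with an added edge `uw` are the homomorphisms from `F` that send `u` and
`w` to adjacent vertices; used to count what an added edge destroys. -/
def homSupEdgeEquiv (F : SimpleGraph W) (G : SimpleGraph V) {u w : W} (huw : u ≠ w) :
    (F ⊔ edge u w →g G) ≃ {f : F →g G // G.Adj (f u) (f w)} where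
  toFun f := ⟨f.comp (.ofLE le_sup_left), f.map_rel (by simp [edge_adj, huw])⟩
  invFun f := ⟨f.1, by
    rintro a b (hab | hab)
    · exact f.1.map_rel hab
    · rcases ((edge_adj ..).1 hab).1 with ⟨rfl, rfl⟩ | ⟨rfl, rfl⟩
      exacts [f.2, f.2.symm]⟩
  left_inv _ := rfl
  right_inv _ := rfl

lemma card_hom_sup_edge_add_card [Finite V] [Finite W] (F : SimpleGraph W) (G : SimpleGraph V)
    {u w : W} (huw : u ≠ w) :
    Nat.card (F ⊔ edge u w →g G) + Nat.card {f : F →g G // ¬ G.Adj (f u) (f w)} =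
      Nat.card (F →g G) := by
  classical
  rw [Nat.card_congr (homSupEdgeEquiv F G huw), ← Nat.card_sum,
    Nat.card_congr (Equiv.sumCompl _)]

open Classical in
/-- `F` is a spanning subgraph of `H` with girth at least `l` and maximum degree at most `Δ`: the
state of the greedy construction. -/
structure IsSparseSubgraph [Fintype W] (H : SimpleGraph W) (Δ l : ℕ) (F : SimpleGraph W) :
    Prop where
  le : F ≤ H
  le_egirth : l ≤ F.egirth
  degree_le : ∀ v, F.degree v ≤ Δ

open Classical in
/-- The edge `uw` of `H` may be added to `F` keeping the degree bound `Δ` and girth at least `l`.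
With the extended distance, vertices in different components of `F` are infinitely far apart. -/
structure IsFreePair [Fintype W] (H F : SimpleGraph W) (Δ l : ℕ) (u w : W) : Prop where
  adj : H.Adj u w
  degree_left_lt : F.degree u < Δ
  degree_right_lt : F.degree w < Δ
  le_edist : l ≤ F.edist u w

lemma isSparseSubgraph_bot [Fintype W] (H : SimpleGraph W) (Δ l : ℕ) :
    IsSparseSubgraph H Δ l ⊥ where
  le := bot_le
  le_egirth := by simp
  degree_le v := by simp

lemma IsSparseSubgraph.sup_edge [Fintype W] {H F : SimpleGraph W} {Δ l : ℕ} {u w : W}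
    (hF : IsSparseSubgraph H Δ l F) (huw : IsFreePair H F Δ l u w) :
    IsSparseSubgraph H Δ l (F ⊔ edge u w) where
  le := sup_le hF.le ((edge_le_iff H).2 (.inr huw.adj))
  le_egirth := le_egirth_sup_edge hF.le_egirth huw.le_edist
  degree_le v := by
    classical
    by_cases hv : v = u ∨ v = w
    · refine (degree_sup_edge_le F u w v).trans ?_
      rcases hv with rfl | rfl
      exacts [huw.degree_left_lt, huw.degree_right_lt]
    · rw [not_or] at hv
      exact (degree_sup_edge_of_ne F hv.1 hv.2).trans_le (hF.degree_le v)

/-- Quantitative nonexistence of homomorphisms from `H` to `G`: every vertex map sends all edges of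
some complete bipartite piece of `H`, with parts of size at least `s`, to non-edges. The parts are
disjoint because `H` is loopless. -/
def IsFarFromHom (H : SimpleGraph W) (G : SimpleGraph V) (s : ℕ) : Prop :=
  ∀ f : W → V, ∃ A B : Finset W, s ≤ #A ∧ s ≤ #B ∧
    ∀ a ∈ A, ∀ b ∈ B, H.Adj a b ∧ ¬ G.Adj (f a) (f b)

/-- The blow-up of `G`, in which each vertex is replaced by an independent set indexed by `ι`. -/
abbrev blowup (G : SimpleGraph V) (ι : Type*) : SimpleGraph (V × ι) :=
  G.comap Prod.fst

lemma isFarFromHom_blowup [Fintype V] [Nonempty V] {G : SimpleGraph V} {H : SimpleGraph W}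
    {ι : Type*} [Fintype ι] (hHG : ¬ Nonempty (H →g G)) {s : ℕ}
    (hs : Fintype.card V * s ≤ Fintype.card ι) : IsFarFromHom (blowup H ι) G s := by
  classical
  intro f
  have hmajority (x : W) : ∃ v : V, s ≤ #{i : ι | f (x, i) = v} :=
    Fintype.exists_le_card_fiber_of_mul_le_card _ hs
  choose g hg using hmajority
  obtain ⟨x, y, hxy, hgxy⟩ : ∃ x y, H.Adj x y ∧ ¬ G.Adj (g x) (g y) := by
    by_contra! hhom
    exact hHG ⟨⟨g, hhom _ _⟩⟩
  let fiber (z : W) : Finset (W × ι) := ({i | f (z, i) = g z} : Finset ι).map (.sectR z ι)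
  have hfiber (z : W) : s ≤ #(fiber z) := by simpa [fiber] using hg z
  refine ⟨fiber x, fiber y, hfiber x, hfiber y, fun a ha b hb => ?_⟩
  simp only [fiber, mem_map, mem_filter_univ, Function.Embedding.sectR_apply] at ha hb
  obtain ⟨i, hi, rfl⟩ := ha
  obtain ⟨j, hj, rfl⟩ := hb
  exact ⟨hxy, by rwa [hi, hj]⟩

section Greedy

variable [Fintype W] {H F : SimpleGraph W} {G : SimpleGraph V} {Δ l q : ℕ}

open Classical in
lemma IsSparseSubgraph.sq_le_card_isFreePair (hF : IsSparseSubgraph H Δ l F)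
    (hball : (Δ + 1) ^ l ≤ q) (hsat : #{v | Δ ≤ F.degree v} ≤ q) {A B : Finset W}
    (hA : 2 * q ≤ #A) (hB : 3 * q ≤ #B) (hAB : ∀ a ∈ A, ∀ b ∈ B, H.Adj a b) :
    q ^ 2 ≤ #{p ∈ A ×ˢ B | IsFreePair H F Δ l p.1 p.2} := by
  let S : Finset W := {v | Δ ≤ F.degree v}
  have hAS : q ≤ #(A \ S) := by
    have := le_card_sdiff S A
    lia
  have hfree : ∀ a ∈ A \ S, q ≤ #{b ∈ B | IsFreePair H F Δ l a b} := by
    intro a ha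
    have hsub : (B \ S) \ (F.ball a l).toFinset ⊆ {b ∈ B | IsFreePair H F Δ l a b} := by
      intro b hb
      simp only [S, mem_sdiff, mem_filter, mem_univ, true_and, not_le, Set.mem_toFinset, mem_ball,
        not_lt] at ha hb ⊢
      exact ⟨hb.1.1, hAB a ha.1 b hb.1.1, ha.2, hb.1.2, edist_comm (G := F) ▸ hb.2⟩
    have := card_ball_le hF.degree_le a l
    have := le_card_sdiff S B
    have := le_card_sdiff (F.ball a l).toFinset (B \ S)
    have := card_le_card hsub
    lia
  calc q ^ 2 = q * q := sq q
    _ ≤ #(A \ S) * q := Nat.mul_le_mul_right _ hAS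
    _ ≤ ∑ a ∈ A \ S, #{b ∈ B | IsFreePair H F Δ l a b} := card_nsmul_le_sum _ _ _ hfree
    _ ≤ ∑ a ∈ A, #{b ∈ B | IsFreePair H F Δ l a b} := sum_le_sum_of_subset sdiff_subset
    _ = #{p ∈ A ×ˢ B | IsFreePair H F Δ l p.1 p.2} := by
      simp only [card_filter, sum_product]

open Classical in
lemma IsSparseSubgraph.exists_isFreePair_card_mul_le [Finite V] [Nonempty V]
    (hF : IsSparseSubgraph H Δ l F) (hH : IsFarFromHom H G (3 * q)) (hball : (Δ + 1) ^ l ≤ q)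
    (hsat : #{v | Δ ≤ F.degree v} ≤ q) :
    ∃ u w, IsFreePair H F Δ l u w ∧
      Nat.card (F →g G) * q ^ 2 ≤
        Fintype.card W ^ 2 * Nat.card {f : F →g G // ¬ G.Adj (f u) (f w)} := by
  have := Fintype.ofFinite (F →g G)
  let P : Finset (W × W) := {p | IsFreePair H F Δ l p.1 p.2}
  have hmany (f : W → V) : q ^ 2 ≤ #{p ∈ P | ¬ G.Adj (f p.1) (f p.2)} := by
    obtain ⟨A, B, hA, hB, hAB⟩ := hH f
    have hadj : ∀ a ∈ A, ∀ b ∈ B, H.Adj a b := fun a ha b hb => (hAB a ha b hb).1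
    refine (hF.sq_le_card_isFreePair hball hsat (by lia) hB hadj).trans
      (card_le_card fun p hp => ?_)
    simp only [P, mem_filter, mem_product, mem_univ, true_and] at hp ⊢
    exact ⟨hp.2, (hAB _ hp.1.1 _ hp.1.2).2⟩
  have hq : 0 < q := (Nat.pow_pos Δ.succ_pos).trans_le hball
  have hP : P.Nonempty := by
    have hpos := (pow_pos hq 2).trans_le (hmany fun _ => Classical.arbitrary V)
    exact (card_pos.1 hpos).mono (filter_subset _ _)
  obtain ⟨⟨u, w⟩, huw, hle⟩ := exists_card_mul_le_card_mul_card_bipartiteBelow (s := univ)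
    (fun (f : F →g G) (p : W × W) => ¬ G.Adj (f p.1) (f p.2)) hP fun f _ => hmany f
  refine ⟨u, w, (mem_filter.1 huw).2, ?_⟩
  have hcard : #P ≤ Fintype.card W ^ 2 := by
    simpa [sq] using card_le_univ P
  rw [Nat.card_eq_fintype_card, Nat.card_eq_fintype_card, Fintype.card_subtype]
  exact hle.trans (Nat.mul_le_mul_right _ hcard)

open Classical in
lemma IsSparseSubgraph.exists_isFreePair_card_hom_sup_edge_le [Finite V] [Nonempty V]
    (hF : IsSparseSubgraph H Δ l F) (hH : IsFarFromHom H G (3 * q)) (hball : (Δ + 1) ^ l ≤ q)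
    (hsat : #{v | Δ ≤ F.degree v} ≤ q) :
    ∃ u w, IsFreePair H F Δ l u w ∧
      (Nat.card (F ⊔ edge u w →g G) : ℝ) ≤
        (1 - (q / Fintype.card W) ^ 2) * Nat.card (F →g G) := by
  obtain ⟨u, w, huw, hlost⟩ := hF.exists_isFreePair_card_mul_le hH hball hsat
  refine ⟨u, w, huw, ?_⟩
  have hW : (0 : ℝ) < Fintype.card W := by
    have : Nonempty W := ⟨u⟩
    exact_mod_cast Fintype.card_pos
  have hsplit : (Nat.card (F ⊔ edge u w →g G) : ℝ) +
      Nat.card {f : F →g G // ¬ G.Adj (f u) (f w)} = Nat.card (F →g G) :=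
    mod_cast card_hom_sup_edge_add_card F G huw.adj.ne
  have hfraction : (q / Fintype.card W : ℝ) ^ 2 * Nat.card (F →g G) ≤
      Nat.card {f : F →g G // ¬ G.Adj (f u) (f w)} := by
    rw [div_pow, div_mul_eq_mul_div, div_le_iff₀' (by positivity), mul_comm]
    exact_mod_cast hlost
  linarith

open Classical in
lemma exists_isSparseSubgraph_card_hom_le [Fintype V] [Nonempty V]
    (hH : IsFarFromHom H G (3 * q)) (hball : (Δ + 1) ^ l ≤ q) (t : ℕ) (ht : 2 * t ≤ Δ * q) :
    ∃ F, IsSparseSubgraph H Δ l F ∧ #F.edgeFinset ≤ t ∧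
      (Nat.card (F →g G) : ℝ) ≤
        (1 - (q / Fintype.card W) ^ 2) ^ t * Fintype.card V ^ Fintype.card W := by
  induction t with
  | zero =>
    refine ⟨⊥, isSparseSubgraph_bot H Δ l, by simp, ?_⟩
    have hmaps : Nat.card ((⊥ : SimpleGraph W) →g G) ≤ Nat.card (W → V) :=
      Nat.card_le_card_of_injective _ DFunLike.coe_injective
    rw [pow_zero, one_mul]
    simpa using (Nat.cast_le (α := ℝ)).2 hmaps
  | succ t ih =>
    obtain ⟨F, hF, hedges, hcard⟩ := ih (by lia)
    have hsat : #{v | Δ ≤ F.degree v} ≤ q := by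
      have := card_filter_le_degree_mul_le F Δ
      by_contra! hlt
      nlinarith
    obtain ⟨u, w, huw, hdrop⟩ := hF.exists_isFreePair_card_hom_sup_edge_le hH hball hsat
    have hratio : (0 : ℝ) ≤ 1 - (q / Fintype.card W) ^ 2 := by
      obtain ⟨A, _, hA, _⟩ := hH fun _ => Classical.arbitrary V
      have hqW : q ≤ Fintype.card W := by
        have := card_le_univ A
        lia
      exact sub_nonneg.2 (pow_le_one₀ (by positivity)
        (div_le_one_of_le₀ (mod_cast hqW) (by positivity)))
    refine ⟨F ⊔ edge u w, hF.sup_edge huw, ?_, ?_⟩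
    · exact (card_edgeFinset_sup_edge_le F u w).trans (Nat.succ_le_succ hedges)
    · rw [pow_succ', mul_assoc]
      exact hdrop.trans (mul_le_mul_of_nonneg_left hcard hratio)

lemma exists_isSparseSubgraph_not_hom [Fintype V] [Nonempty V]
    (hH : IsFarFromHom H G (3 * q)) (hball : (Δ + 1) ^ l ≤ q) {t : ℕ} (ht : 2 * t ≤ Δ * q)
    (hlt : (1 - (q / Fintype.card W : ℝ) ^ 2) ^ t * Fintype.card V ^ Fintype.card W < 1) :
    ∃ F, IsSparseSubgraph H Δ l F ∧ ¬ Nonempty (F →g G) := by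
  obtain ⟨F, hF, -, hcard⟩ := exists_isSparseSubgraph_card_hom_le hH hball t ht
  refine ⟨F, hF, fun _ => ?_⟩
  exact (Nat.card_pos (α := F →g G)).ne' (Nat.lt_one_iff.1 (mod_cast hcard.trans_lt hlt))

end Greedy

lemma exists_le_egirth_hom_not_hom [Finite V] [Finite W] [Nonempty V] {G : SimpleGraph V}
    {H : SimpleGraph W} (hHG : ¬ Nonempty (H →g G)) (l : ℕ) :
    ∃ (n : ℕ) (F : SimpleGraph (W × Fin n)),
      l ≤ F.egirth ∧ Nonempty (F →g H) ∧ ¬ Nonempty (F →g G) := by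
  have := Fintype.ofFinite V
  have := Fintype.ofFinite W
  have : Nonempty W := by
    by_contra hW
    rw [not_nonempty_iff] at hW
    exact hHG ⟨⟨isEmptyElim, fun {a} => isEmptyElim a⟩⟩
  let k := Fintype.card V
  let M := k * 3 * Fintype.card W
  have : 0 < k := Fintype.card_pos
  have hM : 0 < M := by positivity
  obtain ⟨d, hd⟩ : ∃ d, (1 - (1 / M : ℝ) ^ 2) ^ d < 1 / (k : ℝ) ^ M :=
    exists_pow_lt_of_lt_one (by positivity) (sub_lt_self _ (by positivity))
  have hbase : (1 - (1 / M : ℝ) ^ 2) ^ d * k ^ M < 1 := (lt_div_iff₀ (by positivity)).1 hd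
  have hbase_nonneg : (0 : ℝ) ≤ 1 - (1 / M) ^ 2 :=
    sub_nonneg.2 (pow_le_one₀ (by positivity)
      (div_le_one_of_le₀ (mod_cast hM) (by positivity)))
  let Δ := 2 * d
  let q := (Δ + 1) ^ l
  have hq : 0 < q := by positivity
  have hfar : IsFarFromHom (blowup H (Fin (k * (3 * q)))) G (3 * q) :=
    isFarFromHom_blowup hHG (by simp [k])
  have hlt : (1 - (q / Fintype.card (W × Fin (k * (3 * q))) : ℝ) ^ 2) ^ (d * q) *
      k ^ Fintype.card (W × Fin (k * (3 * q))) < 1 := by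
    have hcard : Fintype.card (W × Fin (k * (3 * q))) = M * q := by
      simp only [Fintype.card_prod, Fintype.card_fin, M]
      ring
    have hratio : (q / (M * q : ℕ) : ℝ) = 1 / M := by
      push_cast
      field_simp
    rw [hcard, hratio, pow_mul, pow_mul, ← mul_pow]
    exact pow_lt_one₀ (by positivity) hbase hq.ne'
  obtain ⟨F, hF, hFG⟩ :=
    exists_isSparseSubgraph_not_hom hfar le_rfl (by simp only [Δ, mul_assoc, le_refl]) hlt
  exact ⟨_, F, hF.le_egirth, ⟨⟨Prod.fst, fun h => hF.le h⟩⟩, hFG⟩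

lemma exists_connected_le_egirth_hom_not_hom [Finite V] [Finite W] [Nonempty V]
    {G : SimpleGraph V} {H : SimpleGraph W} (hHG : ¬ Nonempty (H →g G)) (l : ℕ) :
    ∃ (n : ℕ) (s : Set (W × Fin n)) (F : SimpleGraph s), F.Connected ∧ l ≤ F.egirth ∧
      Nonempty (F →g H) ∧ ¬ Nonempty (F →g G) := by
  obtain ⟨n, F, hF, ⟨g⟩, hFG⟩ := exists_le_egirth_hom_not_hom hHG l
  obtain ⟨C, hC⟩ : ∃ C : F.ConnectedComponent, ¬ Nonempty (C.toSimpleGraph →g G) := by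
    by_contra! h
    exact hFG ⟨F.homOfConnectedComponents fun C => (h C).some⟩
  refine ⟨n, C.supp, C.toSimpleGraph, C.connected_toSimpleGraph, hF.trans ?_,
    ⟨g.comp C.toSimpleGraph_hom⟩, hC⟩
  exact IsContained.egirth_le ⟨⟨C.toSimpleGraph_hom, Subtype.val_injective⟩⟩

end Sparse

universe u v

theorem sparse_incomparability_general {V₁ : Type u} {V₂ : Type v} [Finite V₁] (l : ℕ)
    (G₁ : SimpleGraph V₁) (G₂ : SimpleGraph V₂)
    (hnb₁ : ¬ G₁.Colorable 2) (h₂₁ : ¬ Nonempty (G₂ →g G₁)) :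
    ∃ (W : Type v) (_ : Fintype W) (F : SimpleGraph W),
      F.Connected ∧
      ¬ Nonempty (F →g G₁) ∧ ¬ Nonempty (G₁ →g F) ∧
      Nonempty (F →g G₂) ∧ ¬ Nonempty (G₂ →g F) ∧
      (∀ (v : W) (c : F.Walk v v), c.IsCycle → l ≤ c.length) := by
  have : Nonempty V₁ := not_isEmpty_iff.1 fun _ => hnb₁ (.of_isEmpty 2)
  have hedge : G₁ ≠ ⊥ := fun h => hnb₁ ((colorable_one_iff.2 h).mono one_le_two)
  obtain ⟨H, hfin, hH⟩ : ∃ H : G₂.Subgraph, H.verts.Finite ∧ ¬ Nonempty (H.coe →g G₁) := by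
    by_contra! h
    exact h₂₁ (nonempty_hom_of_forall_finite_subgraph_hom fun H hfin => (h H hfin).some)
  have : Finite H.verts := hfin
  let m := max (Nat.card V₁) (Nat.card H.verts)
  obtain ⟨n, W, F, hconn, hgirth, ⟨g⟩, hFG₁⟩ :=
    exists_connected_le_egirth_hom_not_hom hH (max l (m + 1))
  have hsmall {j : ℕ} (hj : j ≤ m) : (j : ℕ∞) < F.egirth :=
    lt_of_lt_of_le (by norm_cast; lia) hgirth
  refine ⟨W, Fintype.ofFinite W, F, hconn, hFG₁, ?_, ⟨H.hom.comp g⟩, ?_, fun v c hc => ?_⟩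
  · rintro ⟨f⟩
    exact hnb₁ (colorable_two_of_hom_of_card_lt_egirth f (hsmall (le_max_left _ _)))
  · rintro ⟨f⟩
    exact hH (nonempty_hom_of_colorable_two (colorable_two_of_hom_of_card_lt_egirth (f.comp H.hom)
      (hsmall (le_max_right _ _))) hedge)
  · exact_mod_cast (Nat.cast_le.2 (le_max_left l (m + 1))).trans
      (hgirth.trans (egirth_le_length hc))

/-- Sparse Incomparability Lemma: for any positive integer `l` and finite
non-bipartite graphs `G₁ < G₂` there is a finite connected graph `F` of girth
at least `l` which is incomparable with `G₁` and satisfies `F < G₂`. -/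
theorem sparse_incomparability {V₁ V₂ : Type} [Fintype V₁] [Fintype V₂]
    (l : ℕ) (hl : 0 < l)
    (G₁ : SimpleGraph V₁) (G₂ : SimpleGraph V₂)
    (hnb₁ : ¬ G₁.Colorable 2) (hnb₂ : ¬ G₂.Colorable 2)
    (h₁₂ : Nonempty (G₁ →g G₂)) (h₂₁ : ¬ Nonempty (G₂ →g G₁)) :
    ∃ (W : Type) (_ : Fintype W) (F : SimpleGraph W),
      F.Connected ∧
      ¬ Nonempty (F →g G₁) ∧ ¬ Nonempty (G₁ →g F) ∧
      Nonempty (F →g G₂) ∧ ¬ Nonempty (G₂ →g F) ∧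
      (∀ (v : W) (c : F.Walk v v), c.IsCycle → l ≤ c.length) := by
  exact sparse_incomparability_general l G₁ G₂ hnb₁ h₂₁
end
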